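/- Let I be a finite set of classes with |I| = n, let m satisfy 2 ≤ m ≤ n, and let e be an m-voting assignment on I. Fix a label l ∈ I and suppose e(J) = l for every J ∈ P_m with l ∈ J. Then |C_l| = C(n − 1, m − 1), and for every label b ∈ I with b ≠ l, |C_b| ≤ C(n − 1, m − 1) − C(n − 2, m − 2). Consequently, since C(n − 2, m − 2) ≥ 1, the set of dominant labels is exactly D = {l}. -/

import Mathlib

/-!
The sets voting for `l` are exactly the `m`-subsets of `I` containing `l`. A set voting for `b ≠ l`
contains `b` but cannot contain `l`, so the votes for `b` are among the `m`-subsets containing `b`,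
with those containing both `b` and `l` removed. Every label lies in equally many `m`-subsets, and
`C(n - 2, m - 2) > 0` of those containing `b` are lost to `l`, so `b` falls strictly short of `l`.
-/

open Finset

section Counting

variable {α : Type*} [DecidableEq α] {s : Finset α} {a b : α} {k : ℕ}

theorem card_filter_mem_powersetCard (ha : a ∈ s) (hk : 1 ≤ k) :
    #{J ∈ s.powersetCard k | a ∈ J} = (#s - 1).choose (k - 1) := by
  simpa using card_filter_powersetCard_subset {a} s k (by simpa using ha) (by simpa using hk)

theorem card_filter_pair_subset_powersetCard (ha : a ∈ s) (hb : b ∈ s) (hab : a ≠ b) (hk : 2 ≤ k) :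
    #{J ∈ s.powersetCard k | {a, b} ⊆ J} = (#s - 2).choose (k - 2) := by
  have hcard : #{a, b} = 2 := card_pair hab
  simpa only [hcard] using
    card_filter_powersetCard_subset {a, b} s k (insert_subset ha (singleton_subset_iff.2 hb))
      (hcard.trans_le hk)

end Counting

theorem filter_forall_le_eq_singleton {ι β : Type*} [Preorder β] [DecidableLE β]
    {s : Finset ι} {f : ι → β} {a : ι} (ha : a ∈ s) (hlt : ∀ b ∈ s, b ≠ a → f b < f a) :
    {b ∈ s | ∀ c ∈ s, f c ≤ f b} = ({a} : Finset ι) := by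
  refine eq_singleton_iff_unique_mem.2 ⟨mem_filter.2 ⟨ha, fun c hc => ?_⟩, fun b hb => ?_⟩
  · rcases eq_or_ne c a with rfl | hca
    · exact le_rfl
    · exact (hlt c hc hca).le
  · obtain ⟨hbs, hmax⟩ := mem_filter.1 hb
    by_contra hba
    exact (hlt b hbs hba).not_ge (hmax a ha)

section Voting

variable {α : Type*} [DecidableEq α]

/-- The class `C_b` of members of the family `𝒥` that the assignment `e` sends to the label `b`.
The family is arbitrary; the `m`-voting scheme on `I` is the case `𝒥 = I.powersetCard m`. -/
abbrev voteClass (𝒥 : Finset (Finset α)) (e : Finset α → α) (b : α) : Finset (Finset α) :=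
  {J ∈ 𝒥 | e J = b}

variable {𝒥 : Finset (Finset α)} {e : Finset α → α} {b l : α}

theorem voteClass_eq_filter_mem (he : ∀ J ∈ 𝒥, e J ∈ J) (hvote : ∀ J ∈ 𝒥, l ∈ J → e J = l) :
    voteClass 𝒥 e l = {J ∈ 𝒥 | l ∈ J} :=
  filter_congr fun J hJ => ⟨fun hJl => hJl ▸ he J hJ, hvote J hJ⟩

theorem voteClass_subset_filter_mem_sdiff (he : ∀ J ∈ 𝒥, e J ∈ J)
    (hvote : ∀ J ∈ 𝒥, l ∈ J → e J = l) (hbl : b ≠ l) :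
    voteClass 𝒥 e b ⊆ {J ∈ 𝒥 | b ∈ J} \ {J ∈ 𝒥 | {b, l} ⊆ J} := by
  intro J hJ
  obtain ⟨hJ𝒥, rfl⟩ := mem_filter.1 hJ
  have hl : l ∉ J := fun hlJ => hbl (hvote J hJ𝒥 hlJ)
  simp [hJ𝒥, he J hJ𝒥, hl, insert_subset_iff]

variable {I : Finset α} {m : ℕ}

theorem card_voteClass_powersetCard_eq (hm : 1 ≤ m) (he : ∀ J ∈ I.powersetCard m, e J ∈ J)
    (hl : l ∈ I) (hvote : ∀ J ∈ I.powersetCard m, l ∈ J → e J = l) :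
    #(voteClass (I.powersetCard m) e l) = (#I - 1).choose (m - 1) := by
  rw [voteClass_eq_filter_mem he hvote, card_filter_mem_powersetCard hl hm]

theorem card_voteClass_powersetCard_le (hm : 2 ≤ m) (he : ∀ J ∈ I.powersetCard m, e J ∈ J)
    (hl : l ∈ I) (hvote : ∀ J ∈ I.powersetCard m, l ∈ J → e J = l) (hb : b ∈ I) (hbl : b ≠ l) :
    #(voteClass (I.powersetCard m) e b) ≤
      (#I - 1).choose (m - 1) - (#I - 2).choose (m - 2) := by
  have hpair : {J ∈ I.powersetCard m | {b, l} ⊆ J} ⊆ {J ∈ I.powersetCard m | b ∈ J} :=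
    monotone_filter_right _ fun J _ hJ => hJ (mem_insert_self b {l})
  calc
    #(voteClass (I.powersetCard m) e b)
      ≤ #({J ∈ I.powersetCard m | b ∈ J} \ {J ∈ I.powersetCard m | {b, l} ⊆ J}) :=
        card_le_card (voteClass_subset_filter_mem_sdiff he hvote hbl)
    _ = #{J ∈ I.powersetCard m | b ∈ J} - #{J ∈ I.powersetCard m | {b, l} ⊆ J} :=
        card_sdiff_of_subset hpair
    _ = (#I - 1).choose (m - 1) - (#I - 2).choose (m - 2) := by
        rw [card_filter_mem_powersetCard hb (one_le_two.trans hm),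
          card_filter_pair_subset_powersetCard hb hl hbl hm]

end Voting

/-- In the generalized `m`-voting scheme, if every `m`-subset
containing `l` votes for `l`, then `|C_l| = C(n-1, m-1)`, every other label
gets at most `C(n-1, m-1) - C(n-2, m-2)` votes, `C(n-2, m-2) ≥ 1`, and the set
of dominant labels is exactly `{l}`. -/
theorem bemi_m_unanimous_winner {α : Type*} [DecidableEq α]
    (I : Finset α) (n m : ℕ) (hn : I.card = n) (hm2 : 2 ≤ m) (hmn : m ≤ n)
    (e : Finset α → α) (he : ∀ J ∈ I.powersetCard m, e J ∈ J)
    (l : α) (hl : l ∈ I)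
    (hvote : ∀ J ∈ I.powersetCard m, l ∈ J → e J = l) :
    ((I.powersetCard m).filter (fun J => e J = l)).card
      = Nat.choose (n - 1) (m - 1) ∧
    (∀ b ∈ I, b ≠ l →
      ((I.powersetCard m).filter (fun J => e J = b)).card ≤
        Nat.choose (n - 1) (m - 1) - Nat.choose (n - 2) (m - 2)) ∧
    1 ≤ Nat.choose (n - 2) (m - 2) ∧
    (I.filter (fun b => ∀ c ∈ I,
        ((I.powersetCard m).filter (fun J => e J = c)).card ≤
          ((I.powersetCard m).filter (fun J => e J = b)).card)) = {l} := by
  subst hn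
  have hwin := card_voteClass_powersetCard_eq (one_le_two.trans hm2) he hl hvote
  have hlose : ∀ b ∈ I, b ≠ l → #(voteClass (I.powersetCard m) e b) ≤
      (#I - 1).choose (m - 1) - (#I - 2).choose (m - 2) :=
    fun b => card_voteClass_powersetCard_le hm2 he hl hvote
  have hwin_pos : 0 < (#I - 1).choose (m - 1) := Nat.choose_pos (Nat.sub_le_sub_right hmn 1)
  have hpair_pos : 0 < (#I - 2).choose (m - 2) := Nat.choose_pos (Nat.sub_le_sub_right hmn 2)
  have hlt : ∀ b ∈ I, b ≠ l →
      #(voteClass (I.powersetCard m) e b) < #(voteClass (I.powersetCard m) e l) :=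
    fun b hb hbl => (hlose b hb hbl).trans_lt ((Nat.sub_lt hwin_pos hpair_pos).trans_eq hwin.symm)
  exact ⟨hwin, hlose, hpair_pos, filter_forall_le_eq_singleton hl hlt⟩
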